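/- Continuous-time limit of the normalized single-token absorbing reverse probability. Fix σ ∈ (0,1) and suppose the noise-schedule assumption holds at σ. Fix x ∈ X̄ compatible with D, a coordinate h with x^h = m, and a clean token a ∈ Fin K. Then, with t = t_σ(T), one has lim_{T→∞} q̄^h_{t−1|t}(a | x) / β^{(T)}_t = q̄_σ(x^{h→a}) / q̄_σ(x). -/

import Mathlib

open scoped Classical
open Filter

/-- Absorbing-corrupted marginal `q̄_σ(x)`, mask = `none : Option (Fin K)`. -/
noncomputable def qAbs (K H : ℕ) (p : (Fin H → Fin K) → ℝ) (σ : ℝ)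
    (x : Fin H → Option (Fin K)) : ℝ :=
  ∑ x0 : Fin H → Fin K, p x0 *
    ∏ i : Fin H, ((1 - σ) * (if x i = some (x0 i) then (1 : ℝ) else 0)
      + σ * (if x i = none then (1 : ℝ) else 0))

/-- `x ∈ X̄` is compatible with `D = supp p`. -/
def CompatAbs (K H : ℕ) (p : (Fin H → Fin K) → ℝ)
    (x : Fin H → Option (Fin K)) : Prop :=
  ∃ x0 : Fin H → Fin K, p x0 ≠ 0 ∧ ∀ i : Fin H, x i ≠ none → x i = some (x0 i)

/-- Cumulative noise level `σ^{(T)}_t = 1 − ∏_{s=1}^t (1 − β^{(T)}_s)`. -/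
noncomputable def cumNoise (β : ℕ → ℕ → ℝ) (T t : ℕ) : ℝ :=
  1 - ∏ s ∈ Finset.Icc 1 t, (1 - β T s)

/-- One-step absorbing forward kernel `q̄_{t|t−1}(y'|y)` with per-step rate `b`. -/
noncomputable def stepAbs (K H : ℕ) (b : ℝ) (y' y : Fin H → Option (Fin K)) : ℝ :=
  ∏ i : Fin H, ((1 - b) * (if y' i = y i then (1 : ℝ) else 0)
    + b * (if y' i = none then (1 : ℝ) else 0))

/-- Exact single-token absorbing reverse probability
`q̄^h_{t−1|t}(a|x) = Σ_{y : y^h = a} q̄_{t−1}(y) q̄_{t|t−1}(x|y) / q̄_t(x)`. -/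
noncomputable def revAbs (K H : ℕ) (p : (Fin H → Fin K) → ℝ) (β : ℕ → ℕ → ℝ)
    (T t : ℕ) (h : Fin H) (a : Fin K) (x : Fin H → Option (Fin K)) : ℝ :=
  (∑ y ∈ Finset.univ.filter (fun y : Fin H → Option (Fin K) => y h = some a),
      qAbs K H p (cumNoise β T (t - 1)) y * stepAbs K H (β T t) x y)
    / qAbs K H p (cumNoise β T t) x

theorem qAbs_continuous_aux (K H : ℕ) (p : (Fin H → Fin K) → ℝ)
    (x : Fin H → Option (Fin K)) : Continuous (fun σ => qAbs K H p σ x) := by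
  unfold qAbs
  fun_prop

theorem qAbs_pos_aux (K H : ℕ) (p : (Fin H → Fin K) → ℝ) (hp0 : ∀ v, 0 ≤ p v)
    (σ : ℝ) (hσ : σ ∈ Set.Ioo (0 : ℝ) 1)
    (x : Fin H → Option (Fin K)) (hx : CompatAbs K H p x) : 0 < qAbs K H p σ x := by
  obtain ⟨x0, h0, h1⟩ := hx
  obtain ⟨hs0, hs1⟩ := hσ
  unfold qAbs
  refine Finset.sum_pos' (fun v _ => ?_) ⟨x0, Finset.mem_univ _, ?_⟩
  · refine mul_nonneg (hp0 v) (Finset.prod_nonneg fun i _ => ?_)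
    refine add_nonneg (mul_nonneg (by linarith) ?_) (mul_nonneg hs0.le ?_) <;> split_ifs <;> norm_num
  · refine mul_pos (lt_of_le_of_ne (hp0 x0) (Ne.symm h0)) (Finset.prod_pos fun i _ => ?_)
    by_cases hi : x i = none
    · simp [hi, hs0]
    · simp [h1 i hi, hs1]

theorem cumNoise_pred_aux (β : ℕ → ℕ → ℝ) (T t : ℕ) (ht : 1 ≤ t) (hb : β T t < 1) :
    cumNoise β T (t - 1) = 1 - (1 - cumNoise β T t) / (1 - β T t) := by
  obtain ⟨n, rfl⟩ : ∃ n, t = n + 1 := ⟨t - 1, by omega⟩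
  have hne : 1 - β T (n + 1) ≠ 0 := by linarith
  unfold cumNoise
  rw [Finset.prod_Icc_succ_top (by omega)]
  simp only [Nat.add_sub_cancel, sub_sub_cancel]
  rw [mul_div_cancel_right₀ _ hne]

theorem stepAbs_factor_aux (K H : ℕ) (b : ℝ) (x y : Fin H → Option (Fin K)) (h : Fin H)
    (a : Fin K) (hm : x h = none) (hy : y h = some a) :
    stepAbs K H b x y = b * ∏ i ∈ Finset.univ.erase h,
      ((1 - b) * (if x i = y i then (1 : ℝ) else 0) + b * (if x i = none then (1 : ℝ) else 0)) := by
  unfold stepAbs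
  rw [← Finset.mul_prod_erase Finset.univ _ (Finset.mem_univ h)]
  simp [hm, hy]

/-- Continuous-time limit of the normalized single-token absorbing reverse probability:
with `x` compatible with `D`, `x^h = m`, a clean token `a`, and `t = t_σ(T)`,
`q̄^h_{t−1|t}(a|x)/β^{(T)}_t → q̄_σ(x^{h→a})/q̄_σ(x)` as `T → ∞`. -/
theorem absorbing_reverse_normalized_limit
    (K H : ℕ) (hK : 2 ≤ K) (hH : 1 ≤ H)
    (p : (Fin H → Fin K) → ℝ) (hp0 : ∀ v, 0 ≤ p v) (hp1 : ∑ v, p v = 1)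
    (β : ℕ → ℕ → ℝ) (hβ : ∀ T, ∀ t ∈ Finset.Icc 1 T, β T t ∈ Set.Ioo (0 : ℝ) 1)
    (σ : ℝ) (hσ : σ ∈ Set.Ioo (0 : ℝ) 1)
    (tsel : ℕ → ℕ)
    (htsel : ∀ T, 1 ≤ T → tsel T ∈ Finset.Icc 1 T ∧
      ∀ s ∈ Finset.Icc 1 T, |cumNoise β T (tsel T) - σ| ≤ |cumNoise β T s - σ|)
    (hsched1 : Tendsto (fun T => cumNoise β T (tsel T)) atTop (nhds σ))
    (hsched2 : Tendsto (fun T => β T (tsel T)) atTop (nhds 0))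
    (x : Fin H → Option (Fin K)) (hx : CompatAbs K H p x)
    (h : Fin H) (hm : x h = none) (a : Fin K) :
    Tendsto (fun T => revAbs K H p β T (tsel T) h a x / β T (tsel T)) atTop
      (nhds (qAbs K H p σ (Function.update x h (some a)) / qAbs K H p σ x)) := by
  have hq := qAbs_pos_aux K H p hp0 σ hσ x hx
  have hs : Tendsto (fun T => 1 - (1 - cumNoise β T (tsel T)) / (1 - β T (tsel T))) atTop
      (nhds σ) := by
    have := (hsched1.const_sub 1).div (hsched2.const_sub 1) (by norm_num)
    have := this.const_sub 1
    simpa using this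
  have hden : Tendsto (fun T => qAbs K H p (cumNoise β T (tsel T)) x) atTop
      (nhds (qAbs K H p σ x)) :=
    ((qAbs_continuous_aux K H p x).tendsto σ).comp hsched1
  have hnum : Tendsto (fun T =>
      ∑ y ∈ Finset.univ.filter (fun y : Fin H → Option (Fin K) => y h = some a),
        qAbs K H p (1 - (1 - cumNoise β T (tsel T)) / (1 - β T (tsel T))) y *
          ∏ i ∈ Finset.univ.erase h, ((1 - β T (tsel T)) * (if x i = y i then (1 : ℝ) else 0)
            + β T (tsel T) * (if x i = none then (1 : ℝ) else 0))) atTop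
      (nhds (∑ y ∈ Finset.univ.filter (fun y : Fin H → Option (Fin K) => y h = some a),
        qAbs K H p σ y *
          ∏ i ∈ Finset.univ.erase h, ((1 - 0) * (if x i = y i then (1 : ℝ) else 0)
            + 0 * (if x i = none then (1 : ℝ) else 0)))) := by
    refine tendsto_finsetSum _ fun y _ => ?_
    refine (((qAbs_continuous_aux K H p y).tendsto σ).comp hs).mul ?_
    refine tendsto_finsetProd _ fun i _ => ?_
    exact ((hsched2.const_sub 1).mul_const _).add (hsched2.mul_const _)
  have hlim : (∑ y ∈ Finset.univ.filter (fun y : Fin H → Option (Fin K) => y h = some a),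
        qAbs K H p σ y *
          ∏ i ∈ Finset.univ.erase h, ((1 - 0) * (if x i = y i then (1 : ℝ) else 0)
            + 0 * (if x i = none then (1 : ℝ) else 0)))
      = qAbs K H p σ (Function.update x h (some a)) := by
    rw [Finset.sum_eq_single (Function.update x h (some a))]
    · rw [Finset.prod_eq_one, mul_one]
      intro i hi
      simp [Function.update_of_ne (Finset.ne_of_mem_erase hi)]
    · intro y hy hne
      have hyh : y h = some a := (Finset.mem_filter.mp hy).2
      obtain ⟨i, hi⟩ := Function.ne_iff.mp hne
      have hih : i ≠ h := by
        rintro rfl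
        simp [hyh] at hi
      rw [Function.update_of_ne hih] at hi
      rw [Finset.prod_eq_zero (Finset.mem_erase.mpr ⟨hih, Finset.mem_univ i⟩), mul_zero]
      simp [Ne.symm hi]
    · intro hn
      simp at hn
  rw [hlim] at hnum
  refine (hnum.div hden hq.ne').congr' ?_
  filter_upwards [eventually_ge_atTop 1] with T hT
  have hmem := (htsel T hT).1
  obtain ⟨hb0, hb1⟩ := hβ T _ hmem
  unfold revAbs
  rw [cumNoise_pred_aux β T _ (Finset.mem_Icc.mp hmem).1 hb1, Pi.div_apply, div_right_comm]
  congr 1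
  rw [eq_div_iff hb0.ne', Finset.sum_mul]
  refine Finset.sum_congr rfl fun y hy => ?_
  rw [stepAbs_factor_aux K H _ x y h a hm (Finset.mem_filter.mp hy).2]
  ring
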